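/- Let Δ : ℕ₀ → [0,∞) be nonincreasing with Σ_j Δ(j) < ∞ and let Ṽ(x) := x^{1/2} + Σ_{j=0}^∞ min{x^{1/2}, Δ(j)}. Then for every c ≥ 1 and every x ≥ 0, (Ṽ^{−1})*(c·x) ≤ c²·(Ṽ^{−1})*(x), where Ṽ^{−1} is the inverse of the strictly increasing bijection Ṽ of [0,∞) and (Ṽ^{−1})*(u) := sup_{y>0}{u·y − Ṽ^{−1}(y)}. -/

import Mathlib

/-!
Since `min (c * s) d ≤ c * min s d` for `c ≥ 1` and `d ≥ 0`, termwise summation gives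
`Ṽ(c² a) ≤ c Ṽ(a)`. With `a = Ṽ⁻¹(y / c)` and monotonicity of `Ṽ` this becomes
`c² Ṽ⁻¹(y / c) ≤ Ṽ⁻¹(y)`, so `c x y - Ṽ⁻¹(y) ≤ c² (x (y / c) - Ṽ⁻¹(y / c))`, and the claim follows
by taking suprema. The supremum on the right is finite because `Ṽ(a) ≤ √a + ∑ Δ` forces `Ṽ⁻¹` to
grow quadratically.
-/

open Set

section TsumMin

variable {ι : Type*} {Δ : ι → ℝ} {s t : ℝ}

lemma summable_min_const (hΔ : Summable Δ) (hs : 0 ≤ s) : Summable fun j => min s (Δ j) :=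
  .of_norm_bounded hΔ.abs fun _ => abs_le.2
    ⟨le_min ((neg_nonpos.2 (abs_nonneg _)).trans hs) (neg_abs_le _),
      (min_le_right _ _).trans (le_abs_self _)⟩

lemma tsum_min_const_le_tsum (hΔ : Summable Δ) (hs : 0 ≤ s) : ∑' j, min s (Δ j) ≤ ∑' j, Δ j :=
  (summable_min_const hΔ hs).tsum_le_tsum (fun _ => min_le_right _ _) hΔ

lemma tsum_min_const_mono (hΔ : Summable Δ) (hs : 0 ≤ s) (hst : s ≤ t) :
    ∑' j, min s (Δ j) ≤ ∑' j, min t (Δ j) :=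
  (summable_min_const hΔ hs).tsum_le_tsum (fun _ => min_le_min_right _ hst)
    (summable_min_const hΔ (hs.trans hst))

lemma min_mul_le_mul_min {c d : ℝ} (hc : 1 ≤ c) (hd : 0 ≤ d) : min (c * s) d ≤ c * min s d := by
  rw [mul_min_of_nonneg _ _ (zero_le_one.trans hc)]
  exact min_le_min_left _ (le_mul_of_one_le_left hd hc)

lemma tsum_min_mul_const_le {c : ℝ} (hΔ : Summable Δ) (hΔ_nonneg : ∀ j, 0 ≤ Δ j) (hc : 1 ≤ c)
    (hs : 0 ≤ s) : ∑' j, min (c * s) (Δ j) ≤ c * ∑' j, min s (Δ j) := by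
  rw [← tsum_mul_left]
  exact (summable_min_const hΔ (mul_nonneg (zero_le_one.trans hc) hs)).tsum_le_tsum
    (fun j => min_mul_le_mul_min hc (hΔ_nonneg j)) ((summable_min_const hΔ hs).mul_left c)

end TsumMin

section VTilde

variable {ι : Type*} {Δ : ι → ℝ}

/-- The function `Ṽ(x) = √x + ∑ⱼ min(√x, Δ j)` on `[0, ∞)`, for a family `Δ` over any index type.
It is meant for summable `Δ` and `x ≥ 0`, where the series converges. -/
noncomputable def vTilde (Δ : ι → ℝ) (x : ℝ) : ℝ :=
  √x + ∑' j, min √x (Δ j)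

lemma strictMonoOn_vTilde (hΔ : Summable Δ) : StrictMonoOn (vTilde Δ) (Ici 0) := by
  intro a ha b _ hab
  have hsqrt : √a < √b := Real.sqrt_lt_sqrt ha hab
  exact add_lt_add_of_lt_of_le hsqrt (tsum_min_const_mono hΔ (Real.sqrt_nonneg a) hsqrt.le)

lemma vTilde_le_sqrt_add_tsum (hΔ : Summable Δ) (x : ℝ) : vTilde Δ x ≤ √x + ∑' j, Δ j :=
  add_le_add_right (tsum_min_const_le_tsum hΔ (Real.sqrt_nonneg x)) _

lemma vTilde_sq_mul_le (hΔ : Summable Δ) (hΔ_nonneg : ∀ j, 0 ≤ Δ j) {c : ℝ} (hc : 1 ≤ c) (a : ℝ) :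
    vTilde Δ (c ^ 2 * a) ≤ c * vTilde Δ a := by
  have hsqrt : √(c ^ 2 * a) = c * √a := by
    rw [Real.sqrt_mul (sq_nonneg c), Real.sqrt_sq (zero_le_one.trans hc)]
  rw [vTilde, vTilde, hsqrt, mul_add]
  exact add_le_add_right (tsum_min_mul_const_le hΔ hΔ_nonneg hc (Real.sqrt_nonneg a)) _

end VTilde

lemma mul_rightInvOn_div_le {𝕜 : Type*} [Field 𝕜] [LinearOrder 𝕜] [IsStrictOrderedRing 𝕜]
    {f g : 𝕜 → 𝕜} (hf : StrictMonoOn f (Ici 0)) (hgf : RightInvOn g f (Ici 0))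
    (hg : MapsTo g (Ici 0) (Ici 0)) {b c : 𝕜} (hb : 0 ≤ b) (hc : 0 < c)
    (hscale : ∀ a, 0 ≤ a → f (b * a) ≤ c * f a) {y : 𝕜} (hy : 0 ≤ y) :
    b * g (y / c) ≤ g y := by
  have hyc : 0 ≤ y / c := div_nonneg hy hc.le
  refine (hf.le_iff_le (mul_nonneg hb (hg hyc)) (hg hy)).1 ?_
  calc f (b * g (y / c)) ≤ c * f (g (y / c)) := hscale _ (hg hyc)
    _ = y := by rw [hgf hyc, mul_div_cancel₀ _ hc.ne']
    _ = f (g y) := (hgf hy).symm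

section Conjugate

variable {f : ℝ → ℝ}

/-- The convex conjugate `f*(u) = sup_{y > 0} (u y - f y)` of a function on the positive half-line.
As a supremum in `ℝ` it takes the junk value `0` where the set is unbounded above. -/
noncomputable def posConjugate (f : ℝ → ℝ) (u : ℝ) : ℝ :=
  sSup {z : ℝ | ∃ y > 0, z = u * y - f y}

lemma bddAbove_posConjugate_of_le_sqrt_add {S : ℝ} (hf : ∀ y > 0, 0 ≤ f y)
    (hgrowth : ∀ y > 0, y ≤ √(f y) + S) (u : ℝ) :
    BddAbove {z : ℝ | ∃ y > 0, z = u * y - f y} := by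
  refine ⟨|u| * S + u ^ 2 / 4, ?_⟩
  rintro _ ⟨y, hy, rfl⟩
  have complete_square : |u| * √(f y) - f y ≤ u ^ 2 / 4 := by
    nlinarith [Real.sq_sqrt (hf y hy), sq_nonneg (√(f y) - |u| / 2), sq_abs u]
  calc u * y - f y ≤ |u| * y - f y := by gcongr; exact le_abs_self u
    _ ≤ |u| * (√(f y) + S) - f y := by gcongr; exact hgrowth y hy
    _ ≤ |u| * S + u ^ 2 / 4 := by linarith

lemma posConjugate_mul_le {a b u : ℝ} (ha : 0 < a) (hb : 0 ≤ b)
    (hscale : ∀ y > 0, a * b * f (y / a) ≤ f y)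
    (hbdd : BddAbove {z : ℝ | ∃ y > 0, z = u * y - f y}) :
    posConjugate f (b * u) ≤ a * b * posConjugate f u := by
  refine csSup_le ⟨_, 1, one_pos, rfl⟩ ?_
  rintro _ ⟨y, hy, rfl⟩
  calc b * u * y - f y ≤ b * u * y - a * b * f (y / a) := sub_le_sub_left (hscale y hy) _
    _ = a * b * (u * (y / a) - f (y / a)) := by field_simp
    _ ≤ a * b * posConjugate f u :=
      mul_le_mul_of_nonneg_left (le_csSup hbdd ⟨y / a, div_pos hy ha, rfl⟩) (mul_nonneg ha.le hb)

end Conjugate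

theorem conjugate_Vinv_scaling_general {ι : Type*} {Δ : ι → ℝ} (hΔ_nonneg : ∀ j, 0 ≤ Δ j)
    (hΔ_sum : Summable Δ) {Vinv : ℝ → ℝ} (hVinv_right : RightInvOn Vinv (vTilde Δ) (Ici 0))
    (hVinv_nonneg : MapsTo Vinv (Ici 0) (Ici 0)) {c : ℝ} (hc : 1 ≤ c) (x : ℝ) :
    posConjugate Vinv (c * x) ≤ c ^ 2 * posConjugate Vinv x := by
  have hc_pos : 0 < c := one_pos.trans_le hc
  have hscale : ∀ y > 0, c ^ 2 * Vinv (y / c) ≤ Vinv y := fun y hy =>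
    mul_rightInvOn_div_le (strictMonoOn_vTilde hΔ_sum) hVinv_right hVinv_nonneg (sq_nonneg c)
      hc_pos (fun a _ => vTilde_sq_mul_le hΔ_sum hΔ_nonneg hc a) hy.le
  have hgrowth : ∀ y > 0, y ≤ √(Vinv y) + ∑' j, Δ j := fun y hy =>
    (hVinv_right hy.le).ge.trans (vTilde_le_sqrt_add_tsum hΔ_sum _)
  have hbdd := bddAbove_posConjugate_of_le_sqrt_add (fun y hy => hVinv_nonneg hy.le) hgrowth x
  rw [sq] at hscale ⊢
  exact posConjugate_mul_le hc_pos hc_pos.le hscale hbdd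

/-- **Quasi-homogeneity of the convex conjugate of `Ṽ⁻¹`.**
For a nonincreasing summable sequence `Δ` set `Ṽ(x) = √x + ∑_j min(√x, Δ j)`;
`Ṽ` is a strictly increasing bijection of `[0,∞)` with inverse `Vinv`.  Then for
every `c ≥ 1` and `x ≥ 0`, `(Ṽ⁻¹)*(c·x) ≤ c² (Ṽ⁻¹)*(x)`, where
`(Ṽ⁻¹)*(u) = sup_{y>0} (u·y − Ṽ⁻¹(y))`. -/
theorem conjugate_Vinv_scaling
    (Δ : ℕ → ℝ) (hΔ_nonneg : ∀ j, 0 ≤ Δ j) (hΔ_anti : Antitone Δ)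
    (hΔ_sum : Summable Δ)
    (V : ℝ → ℝ)
    (hV : ∀ x : ℝ, 0 ≤ x → V x = Real.sqrt x + ∑' j : ℕ, min (Real.sqrt x) (Δ j))
    (Vinv : ℝ → ℝ)
    (hVinv_left : ∀ x : ℝ, 0 ≤ x → Vinv (V x) = x)
    (hVinv_right : ∀ y : ℝ, 0 ≤ y → V (Vinv y) = y)
    (hVinv_nonneg : ∀ y : ℝ, 0 ≤ y → 0 ≤ Vinv y)
    (c x : ℝ) (hc : 1 ≤ c) (hx : 0 ≤ x) :
    sSup {z : ℝ | ∃ y > 0, z = (c * x) * y - Vinv y} ≤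
      c ^ 2 * sSup {z : ℝ | ∃ y > 0, z = x * y - Vinv y} :=
  conjugate_Vinv_scaling_general hΔ_nonneg hΔ_sum
    (fun y hy => (hV _ (hVinv_nonneg y hy)).symm.trans (hVinv_right y hy)) hVinv_nonneg hc x
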